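/- arXiv:2512.12954 — 2 statements merged into one kernel-verified Lean document; each statement's English description precedes it below -/
import Mathlib

section
/- Let H be a real Hilbert space, N ≥ 2, θ ∈ (0,1), Γ ⊆ (0,∞) a nonempty closed interval, and A₁,…,A_N : H ⇉ H maximally monotone operators. For γ ∈ Γ let T_γ : H^{N−1} → H^{N−1} be the Malitsky–Tam operator: for x = (x¹,…,x^{N−1}), T_γx = x + θ(z² − z¹, …, z^N − z^{N−1}), where z¹ = J_{γA₁}x¹, zⁱ = J_{γAᵢ}(z^{i−1} + xⁱ − x^{i−1}) for i = 2,…,N−1, and z^N = J_{γA_N}(z¹ + z^{N−1} − x^{N−1}). For δ,γ ∈ Γ let Q̃_{δ←γ} : H^{N−1} → H^{N−1} be given componentwise by Q̃¹_{δ←γ}x = (δ/γ)x¹ + (1 − δ/γ)J_{γA₁}x¹ and Q̃ⁱ_{δ←γ}x = (δ/γ)(xⁱ − x¹) + Q̃¹_{δ←γ}x for i = 2,…,N−1. Then for every nonempty bounded set S ⊆ ∪_{γ∈Γ}(Fix T_γ × {γ}) there exists L ≥ 0 such that ‖Q̃_{δ←γ}x − Q̃_{γ←γ}x‖ ≤ L|δ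 − γ| for all δ ∈ Γ and all (x,γ) ∈ S. -/
open scoped Pointwise RealInnerProductSpace

variable {H : Type*}

/-- A set-valued operator is monotone. -/
def SVMonotone [NormedAddCommGroup H] [InnerProductSpace ℝ H] (A : H → Set H) : Prop :=
  ∀ ⦃x y u v : H⦄, u ∈ A x → v ∈ A y → 0 ≤ ⟪x - y, u - v⟫

/-- The graph of a set-valued operator. -/
def SVGraph (A : H → Set H) : Set (H × H) := {p | p.2 ∈ A p.1}

/-- A set-valued operator is maximally monotone. -/
def MaxMonotone [NormedAddCommGroup H] [InnerProductSpace ℝ H] (A : H → Set H) : Prop :=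
  SVMonotone A ∧
    ∀ B : H → Set H, SVMonotone B → SVGraph A ⊆ SVGraph B → SVGraph B = SVGraph A

/-- The set of fixed points of a single-valued operator. -/
def FixSet {E : Type*} (T : E → E) : Set E := {x | T x = x}

/-- `J` is the resolvent `(Id + γA)⁻¹` of the set-valued operator `A`, i.e.
`J x` is a point with `x - J x ∈ γ • A (J x)` for every `x`. -/
def IsResolventOf [NormedAddCommGroup H] [InnerProductSpace ℝ H]
    (A : H → Set H) (γ : ℝ) (J : H → H) : Prop :=
  ∀ x : H, x - J x ∈ γ • A (J x)

/-- The vector `(x¹, …, x^{N−1}) ∈ H^{N−1}` read as a function on the indices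
`1, …, N−1` (so `MTvec N v i = xⁱ`). -/
def MTvec [NormedAddCommGroup H] (N : ℕ) (v : Fin (N - 1) → H) : ℕ → H :=
  fun i => if h : i - 1 < N - 1 then v ⟨i - 1, h⟩ else 0

/-!
Coordinatewise, `Q̃_{δ←γ} x` is the point of parameter `δ / γ` on the line from `J_{γA₁} x¹` to
`xⁱ`, so `‖Q̃_{δ←γ} x - Q̃_{γ←γ} x‖ = |δ - γ| / γ * ‖x - (J_{γA₁} x¹, …, J_{γA₁} x¹)‖`. With `γ`
bounded away from zero, it remains to bound `J_{γA₁} x¹` for bounded `(x¹, γ)`. This holds because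
any `u ∈ A₁ w` gives `w = J_{γA₁} (w + γ u)` for every `γ > 0`, so that nonexpansiveness yields
`‖J_{γA₁} x¹ - w‖ ≤ ‖x¹ - (w + γ u)‖`.
-/

section Resolvent

variable [NormedAddCommGroup H] [InnerProductSpace ℝ H] {A : H → Set H}

theorem IsResolventOf.norm_apply_sub_le {γ : ℝ} {J : H → H} (hJ : IsResolventOf A γ J)
    (hA : SVMonotone A) (hγ : 0 ≤ γ) {w u : H} (hu : u ∈ A w) (x : H) :
    ‖J x - w‖ ≤ ‖x - (w + γ • u)‖ := by
  obtain ⟨s, hs, hsx : γ • s = x - J x⟩ := Set.mem_smul_set.1 (hJ x)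
  have inner_nonneg : 0 ≤ ⟪J x - w, γ • (s - u)⟫ := by
    rw [real_inner_smul_right]
    exact mul_nonneg hγ (hA hs hu)
  have smul_eq : γ • (s - u) = (x - (w + γ • u)) - (J x - w) := by
    rw [smul_sub, hsx]
    abel
  have norm_mul_le : ‖J x - w‖ * ‖J x - w‖ ≤ ‖J x - w‖ * ‖x - (w + γ • u)‖ := by
    rw [smul_eq, inner_sub_right, real_inner_self_eq_norm_mul_norm, sub_nonneg] at inner_nonneg
    exact inner_nonneg.trans (real_inner_le_norm _ _)
  obtain h | h := (norm_nonneg (J x - w)).eq_or_lt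
  · exact h ▸ norm_nonneg _
  · exact le_of_mul_le_mul_left norm_mul_le h

theorem IsResolventOf.norm_apply_le {γ : ℝ} {J : H → H} (hJ : IsResolventOf A γ J)
    (hA : SVMonotone A) (hγ : 0 ≤ γ) {w u : H} (hu : u ∈ A w) (x : H) :
    ‖J x‖ ≤ ‖x‖ + 2 * ‖w‖ + γ * ‖u‖ :=
  calc ‖J x‖ ≤ ‖w‖ + ‖J x - w‖ := norm_le_norm_add_norm_sub' _ _
    _ ≤ ‖w‖ + ‖x - (w + γ • u)‖ := by gcongr; exact hJ.norm_apply_sub_le hA hγ hu x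
    _ ≤ ‖w‖ + (‖x‖ + (‖w‖ + ‖γ • u‖)) := by
      gcongr
      exact (norm_sub_le _ _).trans (by gcongr; exact norm_add_le _ _)
    _ = ‖x‖ + 2 * ‖w‖ + γ * ‖u‖ := by rw [norm_smul, Real.norm_of_nonneg hγ]; ring

theorem exists_norm_resolvent_le_of_norm_le {J : ℝ → H → H} (hA : SVMonotone A)
    (hJ : ∀ γ, 0 < γ → IsResolventOf A γ (J γ)) (R : ℝ) :
    ∃ C, ∀ γ, 0 < γ → γ ≤ R → ∀ x, ‖x‖ ≤ R → ‖J γ x‖ ≤ C := by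
  obtain ⟨u, hu, -⟩ := Set.mem_smul_set.1 (hJ 1 one_pos 0)
  refine ⟨R + 2 * ‖J 1 0‖ + R * ‖u‖, fun γ hγ hγR x hx => ?_⟩
  exact ((hJ γ hγ).norm_apply_le hA hγ.le hu x).trans (by gcongr)

end Resolvent

section Relocator

variable {ι : Type*} {q : ENNReal}

/-- The relocator `Q̃_{δ←γ}` of the Malitsky–Tam operator, which carries fixed points of `T_γ` to
fixed points of `T_δ`. The coordinates are indexed by an arbitrary type `ι`, with `i₀` in the role
of the first index, and `J γ` stands for the resolvent `J_{γA₁}`. The case `i = i₀` of the single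
formula is the paper's separate formula for the first coordinate. -/
noncomputable def relocator [AddCommGroup H] [Module ℝ H] (J : ℝ → H → H) (i₀ : ι) (δ γ : ℝ)
    (x : PiLp q fun _ : ι => H) : PiLp q fun _ : ι => H :=
  WithLp.toLp q fun i =>
    (δ / γ) • (x i - x i₀) + ((δ / γ) • x i₀ + (1 - δ / γ) • J γ (x i₀))

theorem relocator_eq_lineMap [SeminormedAddCommGroup H] [NormedSpace ℝ H] (J : ℝ → H → H) (i₀ : ι)
    (δ γ : ℝ) (x : PiLp q fun _ : ι => H) :
    relocator J i₀ δ γ x =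
      AffineMap.lineMap (WithLp.toLp q (Function.const ι (J γ (x i₀)))) x (δ / γ) := by
  ext i
  simp only [relocator, AffineMap.lineMap_apply_module, PiLp.add_apply, PiLp.smul_apply,
    Function.const_apply]
  module

theorem norm_relocator_sub_relocator_self [SeminormedAddCommGroup H] [NormedSpace ℝ H]
    [Fintype ι] [Fact (1 ≤ q)] (J : ℝ → H → H) (i₀ : ι) (δ : ℝ) {γ : ℝ} (hγ : 0 < γ)
    (x : PiLp q fun _ : ι => H) :
    ‖relocator J i₀ δ γ x - relocator J i₀ γ γ x‖ =
      |δ - γ| / γ * ‖x - WithLp.toLp q (Function.const ι (J γ (x i₀)))‖ := by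
  rw [relocator_eq_lineMap, relocator_eq_lineMap, ← dist_eq_norm, dist_lineMap_lineMap,
    Real.dist_eq, ← sub_div, abs_div, abs_of_pos hγ, dist_comm, dist_eq_norm]

theorem eq_relocator_of_apply_eq_MTvec [NormedAddCommGroup H] [Module ℝ H] {N : ℕ}
    (hN : 0 < N - 1) {J : ℝ → H → H}
    {Q : ℝ → ℝ → (PiLp q fun _ : Fin (N - 1) => H) → PiLp q fun _ : Fin (N - 1) => H}
    (hQ : ∀ δ γ x k, Q δ γ x k = (δ / γ) • (x k - MTvec N x 1) +
      ((δ / γ) • MTvec N x 1 + (1 - δ / γ) • J γ (MTvec N x 1))) :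
    Q = relocator J ⟨0, hN⟩ := by
  have MTvec_one (x : Fin (N - 1) → H) : MTvec N x 1 = x ⟨0, hN⟩ := dif_pos hN
  ext δ γ x k
  rw [hQ, MTvec_one, relocator]

end Relocator

theorem snd_mem_of_mem_iUnion_prod_singleton {α β : Type*} {F : β → Set α} {Γ : Set β} {p : α × β}
    (hp : p ∈ ⋃ γ ∈ Γ, F γ ×ˢ {γ}) : p.2 ∈ Γ := by
  obtain ⟨γ, hγ, -, hpγ : p.2 = γ⟩ := Set.mem_iUnion₂.1 hp
  exact hpγ ▸ hγ

theorem stmt15_general [NormedAddCommGroup H] [InnerProductSpace ℝ H] {ι : Type*} [Fintype ι]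
    {q : ENNReal} [Fact (1 ≤ q)] {A : H → Set H} (hA : SVMonotone A) {J : ℝ → H → H}
    (hJ : ∀ γ, 0 < γ → IsResolventOf A γ (J γ)) (i₀ : ι) {a : ℝ} (ha : 0 < a)
    {S : Set ((PiLp q fun _ : ι => H) × ℝ)} (hS : Bornology.IsBounded S)
    (haS : ∀ p ∈ S, a ≤ p.2) :
    ∃ L : ℝ, 0 ≤ L ∧ ∀ δ : ℝ, ∀ p ∈ S,
      ‖relocator J i₀ δ p.2 p.1 - relocator J i₀ p.2 p.2 p.1‖ ≤ L * |δ - p.2| := by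
  obtain ⟨R, hR, hSR⟩ := hS.exists_pos_norm_le
  obtain ⟨C, hC⟩ := exists_norm_resolvent_le_of_norm_le hA hJ R
  let K : ℝ := (Fintype.card ι : NNReal) ^ (1 / q).toReal
  refine ⟨(R + K * |C|) / a, by positivity, fun δ ⟨x, γ⟩ hp => ?_⟩
  have hγ : 0 < γ := ha.trans_le (haS _ hp)
  have norm_x_le : ‖x‖ ≤ R := (norm_fst_le (x, γ)).trans (hSR _ hp)
  have γ_le : γ ≤ R := (le_abs_self γ).trans ((norm_snd_le (x, γ)).trans (hSR _ hp))
  have norm_J_le : ‖J γ (x i₀)‖ ≤ |C| :=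
    (hC γ hγ γ_le _ ((PiLp.norm_apply_le x i₀).trans norm_x_le)).trans (le_abs_self C)
  have norm_const_le : ‖WithLp.toLp q (Function.const ι (J γ (x i₀)))‖ ≤ K * |C| := by
    have : Nonempty ι := ⟨i₀⟩
    rw [PiLp.norm_toLp_const']
    gcongr
  calc ‖relocator J i₀ δ γ x - relocator J i₀ γ γ x‖
      = |δ - γ| / γ * ‖x - WithLp.toLp q (Function.const ι (J γ (x i₀)))‖ :=
        norm_relocator_sub_relocator_self J i₀ δ hγ x
    _ ≤ |δ - γ| / a * (R + K * |C|) := by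
        gcongr
        · exact haS _ hp
        · exact (norm_sub_le _ _).trans (add_le_add norm_x_le norm_const_le)
    _ = (R + K * |C|) / a * |δ - γ| := by ring

/-- the fixed-point relocators of the Malitsky–Tam operator satisfy
Assumption A: on every nonempty bounded subset `S` of `⋃_{γ∈Γ} (Fix T_γ × {γ})` there
is `L ≥ 0` with `‖Q̃_{δ←γ} x − Q̃_{γ←γ} x‖ ≤ L |δ − γ|` for all `δ ∈ Γ`, `(x,γ) ∈ S`. -/
theorem stmt15 [NormedAddCommGroup H] [InnerProductSpace ℝ H] [CompleteSpace H]
    (N : ℕ) (hN : 2 ≤ N) (θ : ℝ) (hθ : θ ∈ Set.Ioo (0 : ℝ) 1)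
    (a b : ℝ) (ha : 0 < a) (hab : a ≤ b)
    (A : ℕ → H → Set H) (hA : ∀ i, 1 ≤ i → i ≤ N → MaxMonotone (A i))
    (J : ℕ → ℝ → H → H)
    (hJ : ∀ i, 1 ≤ i → i ≤ N → ∀ γ : ℝ, 0 < γ → IsResolventOf (A i) γ (J i γ))
    -- the auxiliary points z¹, …, z^N of the Malitsky–Tam operator
    (Z : ℝ → (PiLp 2 fun _ : Fin (N - 1) => H) → ℕ → H)
    (hZ1 : ∀ γ v, Z γ v 1 = J 1 γ (MTvec N v 1))
    (hZi : ∀ γ v i, 2 ≤ i → i ≤ N - 1 →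
      Z γ v i = J i γ (Z γ v (i - 1) + MTvec N v i - MTvec N v (i - 1)))
    (hZN : ∀ γ v, Z γ v N = J N γ (Z γ v 1 + Z γ v (N - 1) - MTvec N v (N - 1)))
    -- the Malitsky–Tam operator T_γ
    (T : ℝ → (PiLp 2 fun _ : Fin (N - 1) => H) → (PiLp 2 fun _ : Fin (N - 1) => H))
    (hT : ∀ γ v (k : Fin (N - 1)),
      T γ v k = v k + θ • (Z γ v ((k : ℕ) + 2) - Z γ v ((k : ℕ) + 1)))
    -- the fixed-point relocators Q̃_{δ←γ}
    (Q : ℝ → ℝ → (PiLp 2 fun _ : Fin (N - 1) => H) → (PiLp 2 fun _ : Fin (N - 1) => H))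
    (hQ : ∀ δ γ v (k : Fin (N - 1)),
      Q δ γ v k = (δ / γ) • (v k - MTvec N v 1) +
        ((δ / γ) • MTvec N v 1 + (1 - δ / γ) • J 1 γ (MTvec N v 1))) :
    ∀ S : Set ((PiLp 2 fun _ : Fin (N - 1) => H) × ℝ), S.Nonempty →
      Bornology.IsBounded S →
      S ⊆ (⋃ γ ∈ Set.Icc a b, FixSet (T γ) ×ˢ ({γ} : Set ℝ)) →
      ∃ L : ℝ, 0 ≤ L ∧ ∀ δ ∈ Set.Icc a b, ∀ p ∈ S,
        ‖Q δ p.2 p.1 - Q p.2 p.2 p.1‖ ≤ L * |δ - p.2| := by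
  intro S _ hSb hS
  obtain rfl := eq_relocator_of_apply_eq_MTvec (by omega) hQ
  obtain ⟨L, hL, hQL⟩ := stmt15_general (hA 1 le_rfl (by omega)).1 (hJ 1 le_rfl (by omega)) _ ha hSb
    fun p hp => (snd_mem_of_mem_iUnion_prod_singleton (hS hp)).1
  exact ⟨L, hL, fun δ _ => hQL δ⟩
end

section
/- Let H be a real Hilbert space, N ≥ 2, θ ∈ (0,1), and Γ ⊆ (0,∞) a nonempty closed interval. Suppose either (a) A₁,…,A_{N−1} : H → H are monotone and L-Lipschitz single-valued operators and A_N : H ⇉ H is maximally monotone and μ-strongly monotone, or (b) A₁,…,A_{N−1} : H → H are maximally monotone, μ-strongly monotone and L-Lipschitz single-valued operators and A_N : H ⇉ H is maximally monotone. For γ ∈ Γ let T_γ : H^{N−1} → H^{N−1} be the Malitsky–Tam operator: for x = (x¹,…,x^{N−1}), T_γx = x + θ(z² − z¹, …, z^N − z^{N−1}), where z¹ = J_{γA₁}x¹, zⁱ = J_{γAᵢ}(z^{i−1} + xⁱ − x^{i−1}) for i = 2,…,N−1, and z^N = J_{γA_N}(z¹ + z^{N−1} − x^{N−1}). Then there exists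 β ∈ [0,1) such that for every γ ∈ Γ, T_γ is a β-contraction on H^{N−1}. -/
open scoped Pointwise RealInnerProductSpace

variable {H : Type*}

/-- A set-valued operator is `μ`-strongly monotone. -/
def SVStrongMonotone [NormedAddCommGroup H] [InnerProductSpace ℝ H]
    (μ : ℝ) (A : H → Set H) : Prop :=
  ∀ ⦃x y u v : H⦄, u ∈ A x → v ∈ A y → μ * ‖x - y‖ ^ 2 ≤ ⟪x - y, u - v⟫

/-- A set-valued operator is single-valued. -/
def SingleValued (A : H → Set H) : Prop := ∀ p : H, ∃ u : H, A p = {u}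

/-- A set-valued operator is `L`-Lipschitz (as a single-valued map). -/
def SVLipschitz [NormedAddCommGroup H] (L : ℝ) (A : H → Set H) : Prop :=
  ∀ ⦃p q u v : H⦄, u ∈ A p → v ∈ A q → ‖u - v‖ ≤ L * ‖p - q‖

/-!
Index from zero and put `gⁱ := (argument of the i-th resolvent) - zⁱ`. With `n := N - 1`, the
recursion says that `xⁱ = zⁱ + ∑_{k ≤ i} gᵏ` for `i < n` and that `∑_{k ≤ n} gᵏ = z⁰ - zⁿ`. These
relations are linear, so they pass to differences of two evaluations of the operator, and summation
by parts turns them into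
`‖T x‖² = ‖x‖² - θ(1 - θ) ∑ ‖zⁱ⁺¹ - zⁱ‖² - θ ‖z⁰ - zⁿ‖² - 2θ ∑ ⟪zⁱ, gⁱ⟫`.
The subtracted terms dominate `‖x‖²`: strong monotonicity of one operator bounds one `zʲ`, the
increments `zⁱ⁺¹ - zⁱ` carry this bound to every `zⁱ`, the Lipschitz property carries it to `gⁱ` for
`i < n`, and `x` is a combination of these.
-/

open Finset

theorem norm_sub_le_mul_of_norm_sub_succ_le [SeminormedAddCommGroup H] {z : ℕ → H} {n : ℕ} {r : ℝ}
    (hr : 0 ≤ r) (hz : ∀ i < n, ‖z (i + 1) - z i‖ ≤ r) {i j : ℕ} (hi : i ≤ n) (hj : j ≤ n) :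
    ‖z i - z j‖ ≤ n * r := by
  wlog hij : i ≤ j generalizing i j
  · rw [norm_sub_rev]
    exact this hj hi (le_of_not_ge hij)
  have hsum : dist (z i) (z j) ≤ ∑ _k ∈ Ico i j, r :=
    dist_le_Ico_sum_of_dist_le hij fun {k} _ hkj => by
      rw [dist_comm, dist_eq_norm]
      exact hz k (hkj.trans_le hj)
  rw [sum_const, Nat.card_Ico, nsmul_eq_mul, dist_eq_norm] at hsum
  refine hsum.trans ?_
  gcongr
  exact (Nat.sub_le j i).trans hj

theorem norm_sq_piLp_eq_sum_range [SeminormedAddCommGroup H] {n : ℕ}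
    (v : PiLp 2 fun _ : Fin n => H) (f : ℕ → H) (hf : ∀ k : Fin n, v k = f k) :
    ‖v‖ ^ 2 = ∑ i ∈ range n, ‖f i‖ ^ 2 := by
  simp only [PiLp.norm_sq_eq_of_L2, hf]
  exact Fin.sum_univ_eq_sum_range (fun i => ‖f i‖ ^ 2) n

theorem MTvec_val_add_one [NormedAddCommGroup H] {N : ℕ} (v : Fin (N - 1) → H) (k : Fin (N - 1)) :
    MTvec N v (k + 1) = v k := by
  simp [MTvec]

section InnerSums

variable [SeminormedAddCommGroup H] [InnerProductSpace ℝ H]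

theorem two_mul_sum_inner_sub_succ (z : ℕ → H) (n : ℕ) :
    2 * ∑ i ∈ range n, ⟪z i, z (i + 1) - z i⟫ =
      ‖z n‖ ^ 2 - ‖z 0‖ ^ 2 - ∑ i ∈ range n, ‖z (i + 1) - z i‖ ^ 2 := by
  rw [← sum_range_sub (fun i => ‖z i‖ ^ 2), ← sum_sub_distrib, mul_sum]
  refine sum_congr rfl fun i _ => ?_
  rw [norm_sub_sq_real, inner_sub_right, real_inner_self_eq_norm_sq, real_inner_comm]
  ring

theorem sum_inner_sum_range_sub_succ (z g : ℕ → H) (n : ℕ) :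
    ∑ i ∈ range n, ⟪∑ k ∈ range (i + 1), g k, z (i + 1) - z i⟫ =
      ⟪∑ k ∈ range (n + 1), g k, z n⟫ - ∑ i ∈ range (n + 1), ⟪z i, g i⟫ := by
  induction n with
  | zero => simp [real_inner_comm]
  | succ n ih =>
    rw [sum_range_succ, ih, sum_range_succ g (n + 1),
      sum_range_succ (fun i => ⟪z i, g i⟫) (n + 1), inner_add_left, inner_sub_right,
      real_inner_comm (z (n + 1)) (g (n + 1))]
    ring

theorem sum_norm_sq_add_smul (x d : ℕ → H) (θ : ℝ) (n : ℕ) :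
    ∑ i ∈ range n, ‖x i + θ • d i‖ ^ 2 =
      ∑ i ∈ range n, ‖x i‖ ^ 2 + θ * (2 * ∑ i ∈ range n, ⟪x i, d i⟫) +
        θ ^ 2 * ∑ i ∈ range n, ‖d i‖ ^ 2 := by
  simp only [mul_sum, ← sum_add_distrib]
  refine sum_congr rfl fun i _ => ?_
  rw [norm_add_sq_real, inner_smul_right, norm_smul, mul_pow, Real.norm_eq_abs, sq_abs]
  ring

end InnerSums

section ScaledOperator

variable {A : H → Set H} {γ : ℝ}

theorem SVLipschitz.const_smul [NormedAddCommGroup H] [NormedSpace ℝ H] {L : ℝ}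
    (hA : SVLipschitz L A) (hγ : 0 ≤ γ) : SVLipschitz (γ * L) (γ • A) := by
  rintro x y _ _ ⟨u, hu, rfl⟩ ⟨v, hv, rfl⟩
  simp only [← smul_sub, norm_smul_of_nonneg hγ, mul_assoc]
  exact mul_le_mul_of_nonneg_left (hA hu hv) hγ

theorem SVLipschitz.mono [NormedAddCommGroup H] {K L : ℝ} (hA : SVLipschitz L A) (hLK : L ≤ K) :
    SVLipschitz K A := fun _ _ _ _ hu hv =>
  (hA hu hv).trans (mul_le_mul_of_nonneg_right hLK (norm_nonneg _))

variable [NormedAddCommGroup H] [InnerProductSpace ℝ H]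

theorem SVMonotone.const_smul (hA : SVMonotone A) (hγ : 0 ≤ γ) : SVMonotone (γ • A) := by
  rintro x y _ _ ⟨u, hu, rfl⟩ ⟨v, hv, rfl⟩
  simp only [← smul_sub, inner_smul_right]
  exact mul_nonneg hγ (hA hu hv)

theorem SVStrongMonotone.const_smul {μ : ℝ} (hA : SVStrongMonotone μ A) (hγ : 0 ≤ γ) :
    SVStrongMonotone (γ * μ) (γ • A) := by
  rintro x y _ _ ⟨u, hu, rfl⟩ ⟨v, hv, rfl⟩
  simp only [← smul_sub, inner_smul_right, mul_assoc]
  exact mul_le_mul_of_nonneg_left (hA hu hv) hγ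

theorem SVStrongMonotone.mono {μ κ : ℝ} (hA : SVStrongMonotone μ A) (hκμ : κ ≤ μ) :
    SVStrongMonotone κ A := fun _ _ _ _ hu hv =>
  (mul_le_mul_of_nonneg_right hκμ (sq_nonneg _)).trans (hA hu hv)

end ScaledOperator

section Dissipation

variable [SeminormedAddCommGroup H] [InnerProductSpace ℝ H]

/-- Up to the factor `θ (1 - θ)`, a lower bound for the decrease of the squared distance of two
points under the Malitsky–Tam operator; here `z` and `g` are the differences of their auxiliary
points and of their resolvent displacements. -/
noncomputable def mtDissipation (n : ℕ) (z g : ℕ → H) : ℝ :=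
  ∑ i ∈ range n, ‖z (i + 1) - z i‖ ^ 2 + ∑ i ∈ range (n + 1), ⟪z i, g i⟫

variable {n : ℕ} {z g : ℕ → H}

theorem norm_sub_succ_sq_le_mtDissipation (hmono : ∀ i ≤ n, 0 ≤ ⟪z i, g i⟫) {i : ℕ} (hi : i < n) :
    ‖z (i + 1) - z i‖ ^ 2 ≤ mtDissipation n z g := by
  refine le_add_of_le_of_nonneg ?_ (sum_nonneg fun k hk => hmono k (mem_range_succ_iff.1 hk))
  exact single_le_sum (f := fun k => ‖z (k + 1) - z k‖ ^ 2) (fun _ _ => sq_nonneg _)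
    (mem_range.2 hi)

theorem inner_le_mtDissipation (hmono : ∀ i ≤ n, 0 ≤ ⟪z i, g i⟫) {j : ℕ} (hj : j ≤ n) :
    ⟪z j, g j⟫ ≤ mtDissipation n z g := by
  refine le_add_of_nonneg_of_le (sum_nonneg fun _ _ => sq_nonneg _) ?_
  exact single_le_sum (f := fun k => ⟪z k, g k⟫) (fun k hk => hmono k (mem_range_succ_iff.1 hk))
    (mem_range_succ_iff.2 hj)

theorem norm_le_sqrt_mtDissipation {κ : ℝ} (hκ : 0 < κ) (hmono : ∀ i ≤ n, 0 ≤ ⟪z i, g i⟫) {j : ℕ}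
    (hj : j ≤ n) (hstrong : κ * ‖z j‖ ^ 2 ≤ ⟪z j, g j⟫) {i : ℕ} (hi : i ≤ n) :
    ‖z i‖ ≤ (n + 1 / √κ) * √(mtDissipation n z g) := by
  have hzj : ‖z j‖ ≤ 1 / √κ * √(mtDissipation n z g) := by
    rw [one_div_mul_eq_div, ← Real.sqrt_div' _ hκ.le]
    refine Real.le_sqrt_of_sq_le ((le_div_iff₀' hκ).2 ?_)
    exact hstrong.trans (inner_le_mtDissipation hmono hj)
  have hzij : ‖z i - z j‖ ≤ n * √(mtDissipation n z g) :=
    norm_sub_le_mul_of_norm_sub_succ_le (Real.sqrt_nonneg _)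
      (fun k hk => Real.le_sqrt_of_sq_le (norm_sub_succ_sq_le_mtDissipation hmono hk)) hi hj
  calc ‖z i‖ ≤ ‖z i - z j‖ + ‖z j‖ := norm_le_norm_sub_add _ _
    _ ≤ n * √(mtDissipation n z g) + 1 / √κ * √(mtDissipation n z g) := add_le_add hzij hzj
    _ = (n + 1 / √κ) * √(mtDissipation n z g) := by ring

end Dissipation

/-- The constant by which the dissipation dominates the squared norm of the input, when the first
`n` operators are `K`-Lipschitz and one operator is `κ`-strongly monotone. -/
noncomputable def mtCoercivityConst (n : ℕ) (K κ : ℝ) : ℝ :=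
  n * ((1 + n * K) * (n + 1 / √κ)) ^ 2

/-- The contraction factor of the Malitsky–Tam operator with relaxation parameter `θ`. The summand
`1` in the denominator keeps the quotient in `[0, 1)` whatever the coercivity constant is. -/
noncomputable def mtContractionFactor (n : ℕ) (θ K κ : ℝ) : ℝ :=
  √(1 - θ * (1 - θ) / (mtCoercivityConst n K κ + 1))

theorem mtCoercivityConst_nonneg (n : ℕ) (K κ : ℝ) : 0 ≤ mtCoercivityConst n K κ := by
  unfold mtCoercivityConst
  positivity

theorem mtContractionFactor_mem_Ico (n : ℕ) {θ : ℝ} (hθ : θ ∈ Set.Ioo (0 : ℝ) 1) (K κ : ℝ) :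
    mtContractionFactor n θ K κ ∈ Set.Ico (0 : ℝ) 1 := by
  have hC := mtCoercivityConst_nonneg n K κ
  have hdecrease : 0 < θ * (1 - θ) / (mtCoercivityConst n K κ + 1) :=
    div_pos (mul_pos hθ.1 (sub_pos.2 hθ.2)) (by linarith)
  exact ⟨Real.sqrt_nonneg _, (Real.sqrt_lt' one_pos).2 (by linarith)⟩

theorem mtContractionFactor_sq (n : ℕ) (θ K κ : ℝ) :
    mtContractionFactor n θ K κ ^ 2 = 1 - θ * (1 - θ) / (mtCoercivityConst n K κ + 1) := by
  have hC := mtCoercivityConst_nonneg n K κ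
  refine Real.sq_sqrt (sub_nonneg.2 ((div_le_one (by linarith)).2 ?_))
  nlinarith [sq_nonneg (θ - 1 / 2)]

/-- The relations between the inputs `x⁰, …, xⁿ⁻¹`, the auxiliary points `z⁰, …, zⁿ` and the
resolvent displacements `g⁰, …, gⁿ` (where `zⁱ = J (zⁱ + gⁱ)`) in one evaluation of the
Malitsky–Tam operator, indexed from zero, in summed form. Entries outside these ranges are
irrelevant. -/
structure IsMalitskyTamTriple [AddCommGroup H] (n : ℕ) (x z g : ℕ → H) : Prop where
  input_eq : ∀ i < n, x i = z i + ∑ k ∈ range (i + 1), g k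
  sum_displacement : ∑ k ∈ range (n + 1), g k = z 0 - z n

namespace IsMalitskyTamTriple

variable {n : ℕ} {x x' z z' g g' : ℕ → H}

theorem sub [AddCommGroup H] (h : IsMalitskyTamTriple n x z g)
    (h' : IsMalitskyTamTriple n x' z' g') :
    IsMalitskyTamTriple n (x - x') (z - z') (g - g') where
  input_eq i hi := by
    simp only [Pi.sub_apply, sum_sub_distrib, h.input_eq i hi, h'.input_eq i hi]
    abel
  sum_displacement := by
    simp only [Pi.sub_apply, sum_sub_distrib, h.sum_displacement, h'.sum_displacement]
    abel

theorem norm_input_le [SeminormedAddCommGroup H] (h : IsMalitskyTamTriple n x z g) {K R : ℝ}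
    (hK : 0 ≤ K) (hg : ∀ i < n, ‖g i‖ ≤ K * ‖z i‖) (hz : ∀ i < n, ‖z i‖ ≤ R) {i : ℕ}
    (hi : i < n) : ‖x i‖ ≤ (1 + n * K) * R := by
  have hR : 0 ≤ R := (norm_nonneg _).trans (hz i hi)
  have hpartial : ‖∑ k ∈ range (i + 1), g k‖ ≤ n * (K * R) := calc
    ‖∑ k ∈ range (i + 1), g k‖ ≤ ∑ _k ∈ range (i + 1), K * R := by
      refine norm_sum_le_of_le _ fun k hk => ?_
      have hkn : k < n := (mem_range.1 hk).trans_le hi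
      exact (hg k hkn).trans (mul_le_mul_of_nonneg_left (hz k hkn) hK)
    _ = (i + 1 : ℕ) * (K * R) := by rw [sum_const, card_range, nsmul_eq_mul]
    _ ≤ n * (K * R) := by
      gcongr
      exact hi
  calc ‖x i‖ ≤ ‖z i‖ + ‖∑ k ∈ range (i + 1), g k‖ := h.input_eq i hi ▸ norm_add_le _ _
    _ ≤ R + n * (K * R) := add_le_add (hz i hi) hpartial
    _ = (1 + n * K) * R := by ring

variable [NormedAddCommGroup H] [InnerProductSpace ℝ H]

theorem two_mul_sum_inner_input (h : IsMalitskyTamTriple n x z g) :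
    2 * ∑ i ∈ range n, ⟪x i, z (i + 1) - z i⟫ =
      -∑ i ∈ range n, ‖z (i + 1) - z i‖ ^ 2 - ‖z 0 - z n‖ ^ 2 -
        2 * ∑ i ∈ range (n + 1), ⟪z i, g i⟫ := by
  have hsplit : ∑ i ∈ range n, ⟪x i, z (i + 1) - z i⟫ =
      ∑ i ∈ range n, ⟪z i, z (i + 1) - z i⟫ +
        ∑ i ∈ range n, ⟪∑ k ∈ range (i + 1), g k, z (i + 1) - z i⟫ := by
    rw [← sum_add_distrib]
    exact sum_congr rfl fun i hi => by rw [h.input_eq i (mem_range.1 hi), inner_add_left]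
  rw [hsplit, mul_add, two_mul_sum_inner_sub_succ, sum_inner_sum_range_sub_succ,
    h.sum_displacement, norm_sub_sq_real, inner_sub_left, real_inner_self_eq_norm_sq]
  ring

theorem sum_norm_sq_add_smul_le_sub (h : IsMalitskyTamTriple n x z g) {θ : ℝ} (hθ : 0 ≤ θ)
    (hmono : ∀ i ≤ n, 0 ≤ ⟪z i, g i⟫) :
    ∑ i ∈ range n, ‖x i + θ • (z (i + 1) - z i)‖ ^ 2 ≤
      ∑ i ∈ range n, ‖x i‖ ^ 2 - θ * (1 - θ) * mtDissipation n z g := by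
  have hinner : 0 ≤ θ * (1 + θ) * ∑ i ∈ range (n + 1), ⟪z i, g i⟫ :=
    mul_nonneg (by positivity) (sum_nonneg fun i hi => hmono i (mem_range_succ_iff.1 hi))
  have hends : 0 ≤ θ * ‖z 0 - z n‖ ^ 2 := by positivity
  rw [sum_norm_sq_add_smul x (fun i => z (i + 1) - z i), h.two_mul_sum_inner_input, mtDissipation]
  linarith

theorem sum_norm_sq_input_le (h : IsMalitskyTamTriple n x z g) {K κ : ℝ} (hK : 0 ≤ K) (hκ : 0 < κ)
    (hg : ∀ i < n, ‖g i‖ ≤ K * ‖z i‖) (hmono : ∀ i ≤ n, 0 ≤ ⟪z i, g i⟫) {j : ℕ} (hj : j ≤ n)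
    (hstrong : κ * ‖z j‖ ^ 2 ≤ ⟪z j, g j⟫) :
    ∑ i ∈ range n, ‖x i‖ ^ 2 ≤ mtCoercivityConst n K κ * mtDissipation n z g := by
  have hx : ∀ i < n, ‖x i‖ ≤ (1 + n * K) * ((n + 1 / √κ) * √(mtDissipation n z g)) :=
    fun i hi => h.norm_input_le hK hg
      (fun k hk => norm_le_sqrt_mtDissipation hκ hmono hj hstrong hk.le) hi
  have hdiss : 0 ≤ mtDissipation n z g := (hmono j hj).trans (inner_le_mtDissipation hmono hj)
  calc ∑ i ∈ range n, ‖x i‖ ^ 2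
      ≤ ∑ _i ∈ range n, ((1 + n * K) * ((n + 1 / √κ) * √(mtDissipation n z g))) ^ 2 :=
        sum_le_sum fun i hi => pow_le_pow_left₀ (norm_nonneg _) (hx i (mem_range.1 hi)) 2
    _ = mtCoercivityConst n K κ * √(mtDissipation n z g) ^ 2 := by
        rw [sum_const, card_range, nsmul_eq_mul, mtCoercivityConst]
        ring
    _ = mtCoercivityConst n K κ * mtDissipation n z g := by rw [Real.sq_sqrt hdiss]

theorem sum_norm_sq_add_smul_le (h : IsMalitskyTamTriple n x z g) {θ K κ : ℝ}
    (hθ : θ ∈ Set.Icc (0 : ℝ) 1) (hK : 0 ≤ K) (hκ : 0 < κ) (hg : ∀ i < n, ‖g i‖ ≤ K * ‖z i‖)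
    (hmono : ∀ i ≤ n, 0 ≤ ⟪z i, g i⟫) {j : ℕ} (hj : j ≤ n)
    (hstrong : κ * ‖z j‖ ^ 2 ≤ ⟪z j, g j⟫) :
    ∑ i ∈ range n, ‖x i + θ • (z (i + 1) - z i)‖ ^ 2 ≤
      mtContractionFactor n θ K κ ^ 2 * ∑ i ∈ range n, ‖x i‖ ^ 2 := by
  have hC := mtCoercivityConst_nonneg n K κ
  have hdiss : 0 ≤ mtDissipation n z g := (hmono j hj).trans (inner_le_mtDissipation hmono hj)
  have hcoercive : (∑ i ∈ range n, ‖x i‖ ^ 2) / (mtCoercivityConst n K κ + 1) ≤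
      mtDissipation n z g := by
    rw [div_le_iff₀' (by linarith), add_one_mul]
    exact le_add_of_le_of_nonneg (h.sum_norm_sq_input_le hK hκ hg hmono hj hstrong) hdiss
  calc ∑ i ∈ range n, ‖x i + θ • (z (i + 1) - z i)‖ ^ 2
      ≤ ∑ i ∈ range n, ‖x i‖ ^ 2 - θ * (1 - θ) * mtDissipation n z g :=
        h.sum_norm_sq_add_smul_le_sub hθ.1 hmono
    _ ≤ ∑ i ∈ range n, ‖x i‖ ^ 2 -
          θ * (1 - θ) * ((∑ i ∈ range n, ‖x i‖ ^ 2) / (mtCoercivityConst n K κ + 1)) :=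
        sub_le_sub_left
          (mul_le_mul_of_nonneg_left hcoercive (mul_nonneg hθ.1 (sub_nonneg.2 hθ.2))) _
    _ = mtContractionFactor n θ K κ ^ 2 * ∑ i ∈ range n, ‖x i‖ ^ 2 := by
        rw [mtContractionFactor_sq]
        ring

theorem norm_sub_le_mtContractionFactor_mul {A : ℕ → H → Set H} {θ K κ : ℝ}
    (h : IsMalitskyTamTriple n x z g) (h' : IsMalitskyTamTriple n x' z' g')
    (hg : ∀ i ≤ n, g i ∈ A i (z i)) (hg' : ∀ i ≤ n, g' i ∈ A i (z' i))
    (hθ : θ ∈ Set.Icc (0 : ℝ) 1) (hK : 0 ≤ K) (hκ : 0 < κ)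
    (hLip : ∀ i < n, SVLipschitz K (A i)) (hmono : ∀ i ≤ n, SVMonotone (A i)) {j : ℕ} (hj : j ≤ n)
    (hstrong : SVStrongMonotone κ (A j)) {v v' Tv Tv' : PiLp 2 fun _ : Fin n => H}
    (hv : ∀ k, v k = x k) (hv' : ∀ k, v' k = x' k)
    (hTv : ∀ k, Tv k = v k + θ • (z (k + 1) - z k))
    (hTv' : ∀ k, Tv' k = v' k + θ • (z' (k + 1) - z' k)) :
    ‖Tv - Tv'‖ ≤ mtContractionFactor n θ K κ * ‖v - v'‖ := by
  have hnorm : ‖v - v'‖ ^ 2 = ∑ i ∈ range n, ‖x i - x' i‖ ^ 2 :=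
    norm_sq_piLp_eq_sum_range _ _ fun k => by rw [PiLp.sub_apply, hv, hv']
  have hnormT : ‖Tv - Tv'‖ ^ 2 =
      ∑ i ∈ range n, ‖x i - x' i + θ • (z (i + 1) - z' (i + 1) - (z i - z' i))‖ ^ 2 :=
    norm_sq_piLp_eq_sum_range _ _ fun k => by
      rw [PiLp.sub_apply, hTv, hTv', hv, hv']
      module
  refine le_of_sq_le_sq ?_ (mul_nonneg (Real.sqrt_nonneg _) (norm_nonneg _))
  rw [mul_pow, hnorm, hnormT]
  exact (h.sub h').sum_norm_sq_add_smul_le hθ hK hκ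
    (fun i hi => hLip i hi (hg i hi.le) (hg' i hi.le))
    (fun i hi => hmono i hi (hg i hi) (hg' i hi)) hj (hstrong (hg j hj) (hg' j hj))

end IsMalitskyTamTriple

section Resolvent

variable [NormedAddCommGroup H] [InnerProductSpace ℝ H]

theorem IsResolventOf.sub_mem_smul {A : H → Set H} {γ : ℝ} {J : H → H} (hJ : IsResolventOf A γ J)
    {p q : H} (hq : q = J p) : p - q ∈ γ • A q :=
  hq ▸ hJ p

theorem exists_isMalitskyTamTriple {A : ℕ → H → Set H} {γ : ℝ} {J : ℕ → H → H} {m : ℕ}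
    (hJ : ∀ i ≤ m + 1, IsResolventOf (A i) γ (J i)) {x z : ℕ → H} (hfirst : z 0 = J 0 (x 0))
    (hstep : ∀ i < m, z (i + 1) = J (i + 1) (z i + x (i + 1) - x i))
    (hlast : z (m + 1) = J (m + 1) (z 0 + z m - x m)) :
    ∃ g : ℕ → H, IsMalitskyTamTriple (m + 1) x z g ∧ ∀ i ≤ m + 1, g i ∈ γ • A i (z i) := by
  -- The last resolvent fits the general step with `z 0` in place of the missing input `x (m + 1)`.
  let y : ℕ → H := fun i => (if i ≤ m then x i else z 0) - z i
  have hy : ∀ i ≤ m, y i = x i - z i := fun i hi => by simp only [y, if_pos hi]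
  have hy_last : y (m + 1) = z 0 - z (m + 1) := by simp [y]
  refine ⟨fun i => if i = 0 then y 0 else y i - y (i - 1), ⟨fun i hi => ?_, ?_⟩, ?_⟩
  · rw [← eq_sum_range_sub' y i, hy i (Nat.lt_succ_iff.1 hi), add_sub_cancel]
  · rw [← eq_sum_range_sub' y (m + 1), hy_last]
  · rintro (_ | i) hi
    · simpa [hy 0 (Nat.zero_le m)] using (hJ 0 hi).sub_mem_smul hfirst
    · simp only [if_neg i.succ_ne_zero, Nat.add_sub_cancel]
      rcases (Nat.le_of_succ_le_succ hi).lt_or_eq with him | rfl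
      · convert (hJ (i + 1) hi).sub_mem_smul (hstep i him) using 1
        rw [hy (i + 1) him, hy i him.le]
        abel
      · convert (hJ (i + 1) hi).sub_mem_smul hlast using 1
        rw [hy_last, hy i le_rfl]
        abel

end Resolvent

theorem stmt16_general [NormedAddCommGroup H] [InnerProductSpace ℝ H]
    (N : ℕ) (hN : 2 ≤ N) (θ : ℝ) (hθ : θ ∈ Set.Ioo (0 : ℝ) 1)
    (a b : ℝ) (ha : 0 < a) (hab : a ≤ b)
    (L μ : ℝ) (hL : 0 ≤ L) (hμ : 0 < μ)
    (A : ℕ → H → Set H)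
    (hA : ∀ i, 1 ≤ i → i ≤ N - 1 → SVMonotone (A i) ∧ SVLipschitz L (A i))
    (hAN : SVMonotone (A N))
    (hstrong : ∃ j, 1 ≤ j ∧ j ≤ N ∧ SVStrongMonotone μ (A j))
    (J : ℕ → ℝ → H → H)
    (hJ : ∀ i, 1 ≤ i → i ≤ N → ∀ γ ∈ Set.Icc a b, IsResolventOf (A i) γ (J i γ))
    (Z : ℝ → (PiLp 2 fun _ : Fin (N - 1) => H) → ℕ → H)
    (hZ1 : ∀ γ v, Z γ v 1 = J 1 γ (MTvec N v 1))
    (hZi : ∀ γ v i, 2 ≤ i → i ≤ N - 1 →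
      Z γ v i = J i γ (Z γ v (i - 1) + MTvec N v i - MTvec N v (i - 1)))
    (hZN : ∀ γ v, Z γ v N = J N γ (Z γ v 1 + Z γ v (N - 1) - MTvec N v (N - 1)))
    (T : ℝ → (PiLp 2 fun _ : Fin (N - 1) => H) → (PiLp 2 fun _ : Fin (N - 1) => H))
    (hT : ∀ γ v (k : Fin (N - 1)),
      T γ v k = v k + θ • (Z γ v ((k : ℕ) + 2) - Z γ v ((k : ℕ) + 1))) :
    ∃ β : ℝ, β ∈ Set.Ico (0 : ℝ) 1 ∧
      ∀ γ ∈ Set.Icc a b, ∀ v w : PiLp 2 fun _ : Fin (N - 1) => H,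
        ‖T γ v - T γ w‖ ≤ β * ‖v - w‖ := by
  refine ⟨_, mtContractionFactor_mem_Ico (N - 1) hθ (b * L) (a * μ), fun γ hγ v w => ?_⟩
  obtain ⟨m, rfl⟩ : ∃ m, N = m + 2 := ⟨N - 2, by omega⟩
  have hγ0 : 0 ≤ γ := ha.le.trans hγ.1
  have htriple : ∀ u : PiLp 2 fun _ : Fin (m + 1) => H, ∃ g,
      IsMalitskyTamTriple (m + 1) (fun i => MTvec (m + 2) u (i + 1))
        (fun i => Z γ u (i + 1)) g ∧
        ∀ i ≤ m + 1, g i ∈ γ • A (i + 1) (Z γ u (i + 1)) := fun u =>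
    exists_isMalitskyTamTriple (fun i hi => hJ (i + 1) (by omega) (by omega) γ hγ) (hZ1 γ u)
      (fun i hi => hZi γ u (i + 2) (by omega) (by omega)) (hZN γ u)
  obtain ⟨g, hg, hg_mem⟩ := htriple v
  obtain ⟨g', hg', hg'_mem⟩ := htriple w
  have hLip : ∀ i < m + 1, SVLipschitz (b * L) (γ • A (i + 1)) := fun i hi =>
    ((hA (i + 1) (by omega) hi).2.const_smul hγ0).mono (mul_le_mul_of_nonneg_right hγ.2 hL)
  have hmono : ∀ i ≤ m + 1, SVMonotone (γ • A (i + 1)) := fun i hi => by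
    rcases hi.lt_or_eq with him | rfl
    · exact (hA (i + 1) (by omega) him).1.const_smul hγ0
    · exact hAN.const_smul hγ0
  obtain ⟨_ | j, hj, hjN, hstrong⟩ := hstrong
  · omega
  exact hg.norm_sub_le_mtContractionFactor_mul (A := fun i => γ • A (i + 1)) hg' hg_mem hg'_mem
    (Set.Ioo_subset_Icc_self hθ) (mul_nonneg (ha.le.trans hab) hL) (mul_pos ha hμ) hLip hmono
    (Nat.le_of_succ_le_succ hjN)
    ((hstrong.const_smul hγ0).mono (mul_le_mul_of_nonneg_right hγ.1 hμ.le))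
    (fun k => (MTvec_val_add_one v.ofLp k).symm) (fun k => (MTvec_val_add_one w.ofLp k).symm)
    (hT γ v) (hT γ w)

/-- under either (a) `A₁,…,A_{N−1}` monotone, single-valued and
`L`-Lipschitz with `A_N` maximally monotone and `μ`-strongly monotone, or (b)
`A₁,…,A_{N−1}` maximally monotone, `μ`-strongly monotone, single-valued and
`L`-Lipschitz with `A_N` maximally monotone, there exists `β ∈ [0,1)` such that the
Malitsky–Tam operator `T_γ` is a `β`-contraction on `H^{N−1}` for every `γ` in the
closed interval `Γ = [a,b] ⊆ (0,∞)`. -/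
theorem stmt16 [NormedAddCommGroup H] [InnerProductSpace ℝ H] [CompleteSpace H]
    (N : ℕ) (hN : 2 ≤ N) (θ : ℝ) (hθ : θ ∈ Set.Ioo (0 : ℝ) 1)
    (a b : ℝ) (ha : 0 < a) (hab : a ≤ b)
    (L μ : ℝ) (hL : 0 ≤ L) (hμ : 0 < μ)
    (A : ℕ → H → Set H)
    (hcase :
      ((∀ i, 1 ≤ i → i ≤ N - 1 →
          SingleValued (A i) ∧ SVMonotone (A i) ∧ SVLipschitz L (A i)) ∧
        MaxMonotone (A N) ∧ SVStrongMonotone μ (A N)) ∨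
      ((∀ i, 1 ≤ i → i ≤ N - 1 →
          SingleValued (A i) ∧ MaxMonotone (A i) ∧ SVStrongMonotone μ (A i) ∧
            SVLipschitz L (A i)) ∧
        MaxMonotone (A N)))
    (J : ℕ → ℝ → H → H)
    (hJ : ∀ i, 1 ≤ i → i ≤ N → ∀ γ : ℝ, 0 < γ → IsResolventOf (A i) γ (J i γ))
    -- the auxiliary points z¹, …, z^N of the Malitsky–Tam operator
    (Z : ℝ → (PiLp 2 fun _ : Fin (N - 1) => H) → ℕ → H)
    (hZ1 : ∀ γ v, Z γ v 1 = J 1 γ (MTvec N v 1))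
    (hZi : ∀ γ v i, 2 ≤ i → i ≤ N - 1 →
      Z γ v i = J i γ (Z γ v (i - 1) + MTvec N v i - MTvec N v (i - 1)))
    (hZN : ∀ γ v, Z γ v N = J N γ (Z γ v 1 + Z γ v (N - 1) - MTvec N v (N - 1)))
    -- the Malitsky–Tam operator T_γ
    (T : ℝ → (PiLp 2 fun _ : Fin (N - 1) => H) → (PiLp 2 fun _ : Fin (N - 1) => H))
    (hT : ∀ γ v (k : Fin (N - 1)),
      T γ v k = v k + θ • (Z γ v ((k : ℕ) + 2) - Z γ v ((k : ℕ) + 1))) :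
    ∃ β : ℝ, β ∈ Set.Ico (0 : ℝ) 1 ∧
      ∀ γ ∈ Set.Icc a b, ∀ v w : PiLp 2 fun _ : Fin (N - 1) => H,
        ‖T γ v - T γ w‖ ≤ β * ‖v - w‖ := by
  have hJ' : ∀ i, 1 ≤ i → i ≤ N → ∀ γ ∈ Set.Icc a b, IsResolventOf (A i) γ (J i γ) :=
    fun i h1 hi γ hγ => hJ i h1 hi γ (ha.trans_le hγ.1)
  rcases hcase with ⟨hA, hAN, hstrong⟩ | ⟨hA, hAN⟩
  · exact stmt16_general N hN θ hθ a b ha hab L μ hL hμ A (fun i h1 hi => (hA i h1 hi).2) hAN.1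
      ⟨N, by omega, le_rfl, hstrong⟩ J hJ' Z hZ1 hZi hZN T hT
  · exact stmt16_general N hN θ hθ a b ha hab L μ hL hμ A
      (fun i h1 hi => ⟨(hA i h1 hi).2.1.1, (hA i h1 hi).2.2.2⟩) hAN.1
      ⟨1, le_rfl, by omega, (hA 1 le_rfl (by omega)).2.2.1⟩ J hJ' Z hZ1 hZi hZN T hT
end
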